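/- Let L be a Lie algebra over a commutative ring R, let a, v ∈ L, and let α₁, …, αₙ ∈ R. Define the left-normed product p = a(v+α₁)(v+α₂)⋯(v+αₙ) by p₀ = a and p_j = ⁅p_{j−1}, v⁆ + α_j • p_{j−1}. Then for every index i with 1 ≤ i ≤ n there exists w ∈ L such that p = ⁅w, v⁆ + αᵢ • w. -/

import Mathlib

/-- The left-normed iterated product `a(v+α₁)(v+α₂)⋯(v+αₙ)`, where
`u(v+α)` denotes `⁅u, v⁆ + α • u`. -/
def leftNormedProd {R L : Type*} [CommRing R] [LieRing L] [LieAlgebra R L]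
    (v : L) (a : L) : List R → L
  | [] => a
  | α :: αs => leftNormedProd v (⁅a, v⁆ + α • a) αs

/-- Applying `u ↦ u(v+β)` to the initial element amounts to applying it to the product. -/
theorem leftNormedProd_bracket_add_smul {R L : Type*} [CommRing R] [LieRing L] [LieAlgebra R L]
    (v a : L) (β : R) (l : List R) :
    leftNormedProd v (⁅a, v⁆ + β • a) l =
      ⁅leftNormedProd v a l, v⁆ + β • leftNormedProd v a l := by
  induction l generalizing a with
  | nil => rfl
  | cons α l ih =>
    simp only [leftNormedProd]
    rw [← ih]
    congr 1
    simp only [add_lie, smul_lie, smul_add, smul_comm α β a]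
    abel

theorem exists_leftNormedProd_eq_of_mem {R L : Type*} [CommRing R] [LieRing L] [LieAlgebra R L]
    (v a : L) {β : R} {l : List R} (h : β ∈ l) :
    ∃ w : L, leftNormedProd v a l = ⁅w, v⁆ + β • w := by
  induction l generalizing a with
  | nil => simp at h
  | cons α l ih =>
    rcases List.mem_cons.mp h with rfl | h
    · exact ⟨_, leftNormedProd_bracket_add_smul v a β l⟩
    · exact ih _ h

/-- Each factor of the left-normed product `p = a(v+α₁)⋯(v+αₙ)` can be pushed to
the right: for every `i` there is `w ∈ L` with `p = ⁅w, v⁆ + αᵢ • w`. -/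
theorem factor_pushed_right {R L : Type*} [CommRing R] [LieRing L] [LieAlgebra R L]
    (a v : L) (n : ℕ) (α : Fin n → R) (i : Fin n) :
    ∃ w : L, leftNormedProd v a (List.ofFn α) = ⁅w, v⁆ + α i • w := by
  exact exists_leftNormedProd_eq_of_mem v a (List.mem_ofFn.mpr ⟨i, rfl⟩)
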